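/- Let K be a field and let d, r ≥ 0 be integers. For every finitely generated commutative K-algebra B there exist a finitely generated commutative K-algebra J and a K-algebra homomorphism ε : B → J ⊗_K A^d_r with the following universal property: for every commutative K-algebra C and every K-algebra homomorphism φ : B → C ⊗_K A^d_r there is a unique K-algebra homomorphism ψ : J → C such that (ψ ⊗ id_{A^d_r}) ∘ ε = φ. (Equivalently, the functor C ↦ Hom_{K-alg}(B, C ⊗_K A^d_r) on commutative K-algebras is corepresentable by a finitely generated K-algebra.) -/

import Mathlib

open MvPolynomial TensorProduct

/-- `A^d_r = K[t₁,…,t_d]/(t₁,…,t_d)^{r+1}`, the coordinate ring of the formal `d`-dimensional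
disk of order `r`. -/
abbrev jetAlgebra (K : Type) [Field K] (d r : ℕ) : Type :=
  MvPolynomial (Fin d) K ⧸
    (Ideal.span (Set.range (X : Fin d → MvPolynomial (Fin d) K))) ^ (r + 1)

/-!
The argument works for any algebra `A` with a finite basis `b` over a commutative ring `R`. A
homomorphism `R[xᵢ] → C ⊗ A` amounts to a choice of coordinates `cᵢⱼ ∈ C` with `xᵢ ↦ ∑ⱼ cᵢⱼ ⊗ bⱼ`,
so for polynomial rings the functor is corepresented by `R[xᵢⱼ]`. If the functor of `P` is
corepresented by `ε : P → J ⊗ A`, the relations cutting out a quotient `P ⧸ I` hold after a base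
change `J → C` exactly when the coordinates of all elements of `ε(I)` vanish in `C`, so the functor
of `P ⧸ I` is corepresented by the quotient of `J` by these coordinates. The jet algebra has a
finite basis because its generators are nilpotent.
-/

universe w

theorem finite_mvPolynomial_quotient_of_X_mem_radical {R σ : Type*} [CommRing R] [Finite σ]
    {I : Ideal (MvPolynomial σ R)} (hI : ∀ i, X i ∈ I.radical) :
    Module.Finite R (MvPolynomial σ R ⧸ I) := by
  have isIntegral_mk_X (i : σ) : IsIntegral R (Ideal.Quotient.mkₐ R I (X i)) := by
    obtain ⟨n, hn⟩ := hI i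
    refine .of_pow n.succ_pos ?_
    rw [← map_pow, Ideal.Quotient.mkₐ_eq_mk,
      Ideal.Quotient.eq_zero_iff_mem.mpr (I.pow_mem_of_pow_mem hn n.le_succ)]
    exact isIntegral_zero
  have adjoin_mk_X :
      Algebra.adjoin R (Set.range fun i => Ideal.Quotient.mkₐ R I (X i)) = ⊤ := by
    rw [Set.range_comp', ← AlgHom.map_adjoin, adjoin_range_X, Algebra.map_top,
      AlgHom.range_eq_top]
    exact Ideal.Quotient.mkₐ_surjective R I
  have := Algebra.finite_adjoin_of_finite_of_isIntegral (Set.finite_range _)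
    (Set.forall_mem_range.mpr isIntegral_mk_X)
  rw [adjoin_mk_X] at this
  exact .equiv Subalgebra.topEquiv.toLinearEquiv

instance jetAlgebra.finite (K : Type) [Field K] (d r : ℕ) : Module.Finite K (jetAlgebra K d r) :=
  finite_mvPolynomial_quotient_of_X_mem_radical fun i =>
    ⟨r + 1, Ideal.pow_mem_pow (Ideal.subset_span (Set.mem_range_self i)) _⟩

section Coefficients

variable {R A C D ι : Type*} [CommSemiring R] [Semiring A] [Algebra R A]
  [Semiring C] [Algebra R C] [Semiring D] [Algebra R D]

theorem basis_repr_map_id (b : Module.Basis ι R A) (ψ : C →ₐ[R] D) (x : C ⊗[R] A) (j : ι) :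
    (Algebra.TensorProduct.basis D b).repr
        (Algebra.TensorProduct.map ψ (AlgHom.id R A) x) j =
      ψ ((Algebra.TensorProduct.basis C b).repr x j) := by
  induction x with
  | zero => simp
  | add x y hx hy => simp only [map_add, Finsupp.add_apply, hx, hy]
  | tmul c a => simp

/-- The ideal of `C` generated by the coordinates, in the `C`-basis `1 ⊗ bⱼ` of `C ⊗ A`, of the
elements of `S`. For commutative `C` the quotient by it is the universal base change
of `C` killing `S`. -/
def coeffIdeal (b : Module.Basis ι R A) (S : Set (C ⊗[R] A)) : Ideal C :=
  Ideal.span {c | ∃ x ∈ S, ∃ j, (Algebra.TensorProduct.basis C b).repr x j = c}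

theorem coeffIdeal_le_ker_iff (b : Module.Basis ι R A) {S : Set (C ⊗[R] A)} {ψ : C →ₐ[R] D} :
    coeffIdeal b S ≤ RingHom.ker ψ ↔
      ∀ x ∈ S, Algebra.TensorProduct.map ψ (AlgHom.id R A) x = 0 := by
  have map_eq_zero_iff (x : C ⊗[R] A) :
      Algebra.TensorProduct.map ψ (AlgHom.id R A) x = 0 ↔
        ∀ j, ψ ((Algebra.TensorProduct.basis C b).repr x j) = 0 := by
    rw [← (Algebra.TensorProduct.basis D b).repr.map_eq_zero_iff, Finsupp.ext_iff]
    simp only [basis_repr_map_id, Finsupp.zero_apply]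
  simp only [map_eq_zero_iff, coeffIdeal, Ideal.span_le]
  constructor
  · exact fun h x hx j => h ⟨x, hx, j, rfl⟩
  · rintro h _ ⟨x, hx, j, rfl⟩
    exact h x hx j

end Coefficients

section WeilRestriction

variable {R A ι : Type*} [CommRing R] [CommRing A] [Algebra R A]

/-- `ε : B → J ⊗ A` exhibits `J` as the Weil restriction along `R → A` of the `A`-algebra `B ⊗ A`,
that is, `J` corepresents `C ↦ Hom(B, C ⊗ A)` with universal element `ε`. The universe `w` of the
test algebras `C` is independent of that of `J`. -/
def IsWeilRestriction {B J : Type*} [CommRing B] [Algebra R B] [CommRing J] [Algebra R J]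
    (ε : B →ₐ[R] J ⊗[R] A) : Prop :=
  ∀ (C : Type w) [CommRing C] [Algebra R C] (φ : B →ₐ[R] C ⊗[R] A),
    ∃! ψ : J →ₐ[R] C, (Algebra.TensorProduct.map ψ (AlgHom.id R A)).comp ε = φ

section Polynomial

variable [Fintype ι]

/-- The homomorphism `R[xᵢ] → R[xᵢⱼ] ⊗ A` whose value at `xᵢ` is the vector with indeterminate
coordinates `xᵢⱼ` in the basis `b`. -/
noncomputable def genericCoordPoint (σ : Type*) (b : Module.Basis ι R A) :
    MvPolynomial σ R →ₐ[R] MvPolynomial (σ × ι) R ⊗[R] A :=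
  aeval fun i => ∑ j, X (i, j) ⊗ₜ[R] b j

theorem basis_repr_genericCoordPoint_X {σ : Type*} (b : Module.Basis ι R A) (i : σ) (j : ι) :
    (Algebra.TensorProduct.basis (MvPolynomial (σ × ι) R) b).repr (genericCoordPoint σ b (X i)) j =
      X (i, j) := by
  classical
  simp [genericCoordPoint, Finsupp.single_apply]

theorem map_comp_genericCoordPoint_eq_iff {σ C : Type*} [CommRing C] [Algebra R C]
    (b : Module.Basis ι R A) {ψ : MvPolynomial (σ × ι) R →ₐ[R] C}
    {φ : MvPolynomial σ R →ₐ[R] C ⊗[R] A} :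
    (Algebra.TensorProduct.map ψ (AlgHom.id R A)).comp (genericCoordPoint σ b) = φ ↔
      ∀ i j, ψ (X (i, j)) = (Algebra.TensorProduct.basis C b).repr (φ (X i)) j := by
  simp only [MvPolynomial.algHom_ext_iff, AlgHom.comp_apply,
    ← (Algebra.TensorProduct.basis C b).repr.injective.eq_iff, Finsupp.ext_iff,
    basis_repr_map_id, basis_repr_genericCoordPoint_X]

theorem isWeilRestriction_genericCoordPoint (σ : Type*) (b : Module.Basis ι R A) :
    IsWeilRestriction.{w} (genericCoordPoint σ b) := by
  intro C _ _ φ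
  simp only [map_comp_genericCoordPoint_eq_iff]
  refine ⟨aeval fun ij => (Algebra.TensorProduct.basis C b).repr (φ (X ij.1)) ij.2,
    fun i j => aeval_X _ _, fun ψ hψ => ?_⟩
  ext ⟨i, j⟩
  rw [hψ, aeval_X]

end Polynomial

section Quotient

variable {P B J : Type*} [CommRing P] [Algebra R P] [CommRing B] [Algebra R B]
  [CommRing J] [Algebra R J] (b : Module.Basis ι R A) (ε : P →ₐ[R] J ⊗[R] A)
  (f : P →ₐ[R] B)

theorem ker_le_ker_map_mk_coeffIdeal_comp :
    RingHom.ker f ≤ RingHom.ker ((Algebra.TensorProduct.map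
      (Ideal.Quotient.mkₐ R (coeffIdeal b (ε '' RingHom.ker f))) (AlgHom.id R A)).comp ε) :=
  fun p hp => (coeffIdeal_le_ker_iff b).mp (Ideal.Quotient.mkₐ_ker R _).ge (ε p) ⟨p, hp, rfl⟩

variable {f} (hf : Function.Surjective f)

/-- The homomorphism `B → (J ⧸ I) ⊗ A` induced by `ε : P → J ⊗ A` on a quotient `f : P → B`, where
`I` is the ideal of coordinates of `ε (ker f)`. -/
noncomputable def quotientPoint :
    B →ₐ[R] (J ⧸ coeffIdeal b (ε '' RingHom.ker f)) ⊗[R] A :=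
  AlgHom.liftOfSurjective f hf _ (ker_le_ker_map_mk_coeffIdeal_comp b ε f)

theorem quotientPoint_comp :
    (quotientPoint b ε hf).comp f = (Algebra.TensorProduct.map
      (Ideal.Quotient.mkₐ R (coeffIdeal b (ε '' RingHom.ker f))) (AlgHom.id R A)).comp ε :=
  AlgHom.liftOfSurjective_comp f hf _ (ker_le_ker_map_mk_coeffIdeal_comp b ε f)

theorem map_comp_quotientPoint_eq_iff {C : Type*} [CommRing C] [Algebra R C]
    {ψ : J ⧸ coeffIdeal b (ε '' RingHom.ker f) →ₐ[R] C} {φ : B →ₐ[R] C ⊗[R] A} :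
    (Algebra.TensorProduct.map ψ (AlgHom.id R A)).comp (quotientPoint b ε hf) = φ ↔
      (Algebra.TensorProduct.map (ψ.comp (Ideal.Quotient.mkₐ R _)) (AlgHom.id R A)).comp ε =
        φ.comp f := by
  rw [← AlgHom.cancel_right hf, AlgHom.comp_assoc, quotientPoint_comp, ← AlgHom.comp_assoc,
    ← Algebra.TensorProduct.map_comp, AlgHom.comp_id]

variable {ε}

theorem IsWeilRestriction.quotientPoint (hε : IsWeilRestriction.{w} ε) :
    IsWeilRestriction.{w} (quotientPoint b ε hf) := by
  intro C _ _ φ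
  simp only [map_comp_quotientPoint_eq_iff]
  obtain ⟨ψ₀, hψ₀, ψ₀_unique⟩ := hε C (φ.comp f)
  have coeffIdeal_le_ker : coeffIdeal b (ε '' RingHom.ker f) ≤ RingHom.ker ψ₀ := by
    rw [coeffIdeal_le_ker_iff, Set.forall_mem_image]
    intro p hp
    rw [← AlgHom.comp_apply, hψ₀, AlgHom.comp_apply, RingHom.mem_ker.mp hp, map_zero]
  obtain ⟨ψ, hψ⟩ : ∃ ψ : J ⧸ coeffIdeal b (ε '' RingHom.ker f) →ₐ[R] C,
      ψ.comp (Ideal.Quotient.mkₐ R _) = ψ₀ :=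
    ⟨Ideal.Quotient.liftₐ _ ψ₀ coeffIdeal_le_ker, Ideal.Quotient.liftₐ_comp _ _ _⟩
  refine ⟨ψ, by simpa only [hψ] using hψ₀, fun ψ' hψ' => ?_⟩
  rw [← AlgHom.cancel_right (Ideal.Quotient.mkₐ_surjective R _), hψ]
  exact ψ₀_unique _ hψ'

end Quotient

end WeilRestriction

theorem jet_functor_corepresentable_general.{u} (R : Type u) [CommRing R]
    (A : Type*) [CommRing A] [Algebra R A] [Module.Free R A] [Module.Finite R A]
    (B : Type*) [CommRing B] [Algebra R B] [Algebra.FiniteType R B] :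
    ∃ (J : Type u) (_ : CommRing J) (_ : Algebra R J), Algebra.FiniteType R J ∧
      ∃ ε : B →ₐ[R] J ⊗[R] A, IsWeilRestriction.{w} ε := by
  obtain ⟨n, f, hf⟩ :=
    Algebra.FiniteType.iff_quotient_mvPolynomial''.mp ‹Algebra.FiniteType R B›
  let b := (Module.Free.chooseBasis R A).reindex (Fintype.equivFin _)
  let ε := quotientPoint b (genericCoordPoint (Fin n) b) hf
  exact ⟨_, inferInstance, inferInstance,
    .of_surjective _ (Ideal.Quotient.mkₐ_surjective R _), ε,
    (isWeilRestriction_genericCoordPoint (Fin n) b).quotientPoint b hf⟩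

/-- For every finitely generated commutative `K`-algebra `B` there exist a
finitely generated commutative `K`-algebra `J` and a `K`-algebra homomorphism
`ε : B → J ⊗_K A^d_r` such that for every commutative `K`-algebra `C` and every `K`-algebra
homomorphism `φ : B → C ⊗_K A^d_r` there is a unique `K`-algebra homomorphism `ψ : J → C`
with `(ψ ⊗ id) ∘ ε = φ`; i.e. the functor `C ↦ Hom_{K-alg}(B, C ⊗_K A^d_r)` is corepresentable
by a finitely generated `K`-algebra. -/
theorem jet_functor_corepresentable
    (K : Type) [Field K] (d r : ℕ)
    (B : Type) [CommRing B] [Algebra K B] [Algebra.FiniteType K B] :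
    ∃ (J : Type) (_ : CommRing J) (_ : Algebra K J), Algebra.FiniteType K J ∧
      ∃ ε : B →ₐ[K] J ⊗[K] jetAlgebra K d r,
        ∀ (C : Type) [CommRing C] [Algebra K C]
          (φ : B →ₐ[K] C ⊗[K] jetAlgebra K d r),
          ∃! ψ : J →ₐ[K] C,
            (Algebra.TensorProduct.map ψ (AlgHom.id K (jetAlgebra K d r))).comp ε = φ :=
  jet_functor_corepresentable_general K (jetAlgebra K d r) B
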